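/- Let a_1, …, a_r : [0,2π)^ν → ℂ be bounded measurable functions and let T_n(a_k) denote their Toeplitz compressions to the cube {0,…,n−1}^ν. Then for any polynomials f_1, …, f_r (with complex coefficients, applied to matrices in the usual way), lim_{n→∞} (1/n^ν) Tr[ f_1(T_n(a_1)) · … · f_r(T_n(a_r)) ] = (2π)^{−ν} ∫_{[0,2π)^ν} f_1(a_1(x)) · … · f_r(a_r(x)) dx. -/

import Mathlib

open MeasureTheory Filter Matrix Set

noncomputable section

/-- The cube `[0, 2π)^ν`. -/
def cube (ν : ℕ) : Set (Fin ν → ℝ) := Set.univ.pi fun _ => Set.Ico 0 (2 * Real.pi)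

/-- Fourier coefficient of `a : [0,2π)^ν → ℂ` at `j ∈ ℤ^ν`:
`â(j) = (2π)^{−ν} ∫_{[0,2π)^ν} a(x) e^{−i j·x} dx`. -/
def fourierCoefficient {ν : ℕ} (a : (Fin ν → ℝ) → ℂ) (j : Fin ν → ℤ) : ℂ :=
  (((2 * Real.pi) ^ ν : ℝ) : ℂ)⁻¹ *
    ∫ x in cube ν, a x * Complex.exp (-Complex.I * ∑ m, (j m : ℂ) * (x m : ℂ))

/-- The Toeplitz compression `T_n(a)`: the `n^ν × n^ν` matrix indexed by multi-indices
`j, k ∈ {0,…,n−1}^ν` with entries `â(j−k)`. -/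
def toeplitz {ν : ℕ} (n : ℕ) (a : (Fin ν → ℝ) → ℂ) :
    Matrix (Fin ν → Fin n) (Fin ν → Fin n) ℂ :=
  Matrix.of fun j k => fourierCoefficient a fun m => (j m : ℤ) - (k m : ℤ)

/-!
The operator-norm bounded sequences of matrices `Aₙ` that are asymptotic to `Tₙ(φ)` in the
normalized Hilbert–Schmidt norm, for some essentially bounded symbol `φ`, form with their symbols
an algebra. The point is that `Tₙ(φψ) - Tₙ(φ)Tₙ(ψ)` tends to zero in that norm: its square is at
most `‖φ‖²` times the average over the box of the squared distances of `ψ eₖ` to the span of the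
box exponentials. By Parseval that average is `∑ₘ |ψ̂(m)|²` minus the average over `k` of the sums
of `|ψ̂(l - k)|²` over `l` in the box, and the latter is a Fejér mean, which converges to the same
sum. The normalized trace is continuous for the Hilbert–Schmidt norm, and for `Tₙ(φ)` it equals
`φ̂(0)`.
-/

open scoped ENNReal Topology Finset

section NormalizedHilbertSchmidt

variable {𝕜 ι : Type*} [RCLike 𝕜] [Fintype ι]

open scoped Matrix.Norms.Frobenius in
/-- The normalized Hilbert–Schmidt norm `A ↦ (|ι|⁻¹ Tr AᴴA)^{1/2}`, in which Toeplitz compressions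
become asymptotically multiplicative. -/
def normalizedHS : Seminorm 𝕜 (Matrix ι ι 𝕜) :=
  (NNReal.sqrt (Fintype.card ι))⁻¹ • normSeminorm 𝕜 (Matrix ι ι 𝕜)

lemma normalizedHS_sq (A : Matrix ι ι 𝕜) :
    normalizedHS A ^ 2 = (Fintype.card ι : ℝ)⁻¹ * ∑ k, ∑ j, ‖A j k‖ ^ 2 := by
  have frobenius_sq : ((∑ j, ∑ k, ‖A j k‖ ^ 2) ^ (1 / 2 : ℝ)) ^ 2 = ∑ j, ∑ k, ‖A j k‖ ^ 2 := by
    rw [← Real.sqrt_eq_rpow, Real.sq_sqrt (by positivity)]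
  rw [Finset.sum_comm, ← frobenius_sq]
  simp [normalizedHS, NNReal.smul_def, mul_pow, Matrix.frobenius_norm_def]

lemma normalizedHS_le_mul {A B : Matrix ι ι 𝕜} {C : ℝ} (hC : 0 ≤ C)
    (h : ∀ k, ∑ j, ‖A j k‖ ^ 2 ≤ C ^ 2 * ∑ j, ‖B j k‖ ^ 2) :
    normalizedHS A ≤ C * normalizedHS B := by
  refine (sq_le_sq₀ (apply_nonneg _ _) (mul_nonneg hC (apply_nonneg _ _))).1 ?_
  rw [mul_pow, normalizedHS_sq, normalizedHS_sq, mul_left_comm, Finset.mul_sum (a := C ^ 2)]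
  gcongr with k
  exact h k

lemma normalizedHS_conjTranspose (A : Matrix ι ι 𝕜) : normalizedHS Aᴴ = normalizedHS A := by
  refine (sq_eq_sq₀ (apply_nonneg _ _) (apply_nonneg _ _)).1 ?_
  rw [normalizedHS_sq, normalizedHS_sq, Finset.sum_comm]
  simp

lemma norm_trace_div_card_le_normalizedHS (A : Matrix ι ι 𝕜) :
    ‖(Fintype.card ι : 𝕜)⁻¹ * A.trace‖ ≤ normalizedHS A := by
  refine (sq_le_sq₀ (norm_nonneg _) (apply_nonneg _ _)).1 ?_
  have trace_le : ‖A.trace‖ ^ 2 ≤ Fintype.card ι * ∑ i, ‖A i i‖ ^ 2 :=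
    (pow_le_pow_left₀ (norm_nonneg _) (norm_sum_le _ _) 2).trans (by
      simpa using sq_sum_le_card_mul_sum_sq (s := Finset.univ) (f := fun i => ‖A i i‖))
  have diag_le : ∑ i, ‖A i i‖ ^ 2 ≤ ∑ k, ∑ j, ‖A j k‖ ^ 2 := Finset.sum_le_sum fun k _ =>
    Finset.single_le_sum (f := fun j => ‖A j k‖ ^ 2) (fun _ _ => sq_nonneg _) (Finset.mem_univ k)
  rcases isEmpty_or_nonempty ι with _ | _
  · simp
  rw [normalizedHS_sq, norm_mul, norm_inv, RCLike.norm_natCast, mul_pow]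
  calc ((Fintype.card ι : ℝ)⁻¹) ^ 2 * ‖A.trace‖ ^ 2
      ≤ ((Fintype.card ι : ℝ)⁻¹) ^ 2 * (Fintype.card ι * ∑ k, ∑ j, ‖A j k‖ ^ 2) := by
        gcongr; exact trace_le.trans (by gcongr)
    _ = (Fintype.card ι : ℝ)⁻¹ * ∑ k, ∑ j, ‖A j k‖ ^ 2 := by field_simp

variable [DecidableEq ι]
open scoped Matrix.Norms.L2Operator

lemma normalizedHS_mul_le_norm_mul (A B : Matrix ι ι 𝕜) :
    normalizedHS (A * B) ≤ ‖A‖ * normalizedHS B :=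
  normalizedHS_le_mul (norm_nonneg _) fun k => by
    have column_le := pow_le_pow_left₀ (norm_nonneg _)
      (A.l2_opNorm_mulVec (WithLp.toLp 2 fun j => B j k)) 2
    rw [mul_pow, EuclideanSpace.norm_sq_eq, EuclideanSpace.norm_sq_eq] at column_le
    exact column_le

lemma normalizedHS_mul_le_mul_norm (A B : Matrix ι ι 𝕜) :
    normalizedHS (A * B) ≤ normalizedHS A * ‖B‖ := by
  rw [← normalizedHS_conjTranspose, Matrix.conjTranspose_mul, ← normalizedHS_conjTranspose A,
    ← Matrix.l2_opNorm_conjTranspose B, mul_comm (normalizedHS _)]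
  exact normalizedHS_mul_le_norm_mul Bᴴ Aᴴ

lemma normalizedHS_mul_sub_le (A B S T R : Matrix ι ι 𝕜) :
    normalizedHS (A * B - R) ≤
      normalizedHS (A - S) * ‖B‖ + ‖S‖ * normalizedHS (B - T) + normalizedHS (R - S * T) := by
  have decomposition : A * B - R = (A - S) * B + S * (B - T) - (R - S * T) := by noncomm_ring
  rw [decomposition]
  exact (map_sub_le_add _ _ _).trans <| add_le_add_left ((map_add_le_add _ _ _).trans <|
    add_le_add (normalizedHS_mul_le_mul_norm _ _) (normalizedHS_mul_le_norm_mul _ _)) _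

end NormalizedHilbertSchmidt

section Compression

variable {𝕜 ι H : Type*} [RCLike 𝕜] [NormedAddCommGroup H] [InnerProductSpace 𝕜 H]

/-- The matrix `⟪eⱼ, M eₖ⟫` of a bounded operator `M` in a family of vectors `e`; when `e` is
orthonormal it represents the compression of `M` to the span of `e`. -/
def compression (e : ι → H) : (H →L[𝕜] H) →ₗ[𝕜] Matrix ι ι 𝕜 where
  toFun M := Matrix.of fun j k => inner 𝕜 (e j) (M (e k))
  map_add' M N := by ext; simp [inner_add_right]
  map_smul' c M := by ext; simp [inner_smul_right]

lemma compression_apply (e : ι → H) (M : H →L[𝕜] H) (j k : ι) :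
    compression e M j k = inner 𝕜 (e j) (M (e k)) := rfl

lemma compression_id [DecidableEq ι] {e : ι → H} (he : Orthonormal 𝕜 e) :
    compression e (ContinuousLinearMap.id 𝕜 H) = 1 := by
  ext j k
  simp [compression_apply, orthonormal_iff_ite.1 he j k, Matrix.one_apply]

variable [Fintype ι] {e : ι → H}

lemma norm_sum_smul_sq_of_orthonormal (he : Orthonormal 𝕜 e) (c : ι → 𝕜) :
    ‖∑ i, c i • e i‖ ^ 2 = ∑ i, ‖c i‖ ^ 2 := by
  simpa using he.orthogonalFamily.norm_sum c Finset.univ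

lemma norm_sub_sum_inner_smul_sq (he : Orthonormal 𝕜 e) (x : H) :
    ‖x - ∑ i, inner 𝕜 (e i) x • e i‖ ^ 2 = ‖x‖ ^ 2 - ∑ i, ‖inner 𝕜 (e i) x‖ ^ 2 := by
  set y := ∑ i, inner 𝕜 (e i) x • e i with hy
  have residual_orthogonal : inner 𝕜 (x - y) y = 0 := by
    have orthogonal_basis (i : ι) : inner 𝕜 (x - y) (e i) = 0 := by
      rw [inner_sub_left, hy, he.inner_left_fintype, inner_conj_symm, sub_self]
    conv_lhs => arg 3; rw [hy]
    simp only [inner_sum, inner_smul_right, orthogonal_basis, mul_zero, Finset.sum_const_zero]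
  have pythagoras := norm_add_sq_eq_norm_sq_add_norm_sq_of_inner_eq_zero _ _ residual_orthogonal
  rw [sub_add_cancel] at pythagoras
  have norm_y : ‖y‖ ^ 2 = ∑ i, ‖inner 𝕜 (e i) x‖ ^ 2 := norm_sum_smul_sq_of_orthonormal he _
  linarith

lemma sum_sq_norm_inner_apply_le (he : Orthonormal 𝕜 e) (M : H →L[𝕜] H) (x : H) :
    ∑ j, ‖inner 𝕜 (e j) (M x)‖ ^ 2 ≤ ‖M‖ ^ 2 * ‖x‖ ^ 2 :=
  (he.sum_inner_products_le (M x)).trans <| by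
    simpa only [mul_pow] using pow_le_pow_left₀ (norm_nonneg _) (M.le_opNorm x) 2

-- The `k`-th column of the difference is `⟪eⱼ, M gₖ⟫` with `gₖ` the part of `N eₖ` orthogonal to
-- the span of `e`, so Bessel's inequality bounds it by `‖M gₖ‖`.
lemma normalizedHS_compression_comp_sub_sq_le (he : Orthonormal 𝕜 e) (M N : H →L[𝕜] H) :
    normalizedHS (compression e (M ∘L N) - compression e M * compression e N) ^ 2 ≤
      ‖M‖ ^ 2 * ((Fintype.card ι : ℝ)⁻¹ *
        ∑ k, (‖N (e k)‖ ^ 2 - ∑ l, ‖inner 𝕜 (e l) (N (e k))‖ ^ 2)) := by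
  rw [normalizedHS_sq, mul_left_comm, Finset.mul_sum (a := ‖M‖ ^ 2)]
  gcongr with k
  rw [← norm_sub_sum_inner_smul_sq he]
  refine le_trans (le_of_eq ?_) (sum_sq_norm_inner_apply_le he M _)
  simp [compression_apply, Matrix.mul_apply, inner_sub_right, inner_sum, inner_smul_right, mul_comm]

open scoped Matrix.Norms.L2Operator in
lemma norm_compression_le [DecidableEq ι] (he : Orthonormal 𝕜 e) (M : H →L[𝕜] H) :
    ‖compression e M‖ ≤ ‖M‖ := by
  rw [Matrix.cstar_norm_def]
  refine ContinuousLinearMap.opNorm_le_bound _ (norm_nonneg _) fun v => ?_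
  refine (sq_le_sq₀ (norm_nonneg _) (by positivity)).1 ?_
  rw [mul_pow, EuclideanSpace.norm_sq_eq, EuclideanSpace.norm_sq_eq v,
    ← norm_sum_smul_sq_of_orthonormal he v.ofLp]
  refine le_trans (le_of_eq ?_) (sum_sq_norm_inner_apply_le he M _)
  simp [Matrix.ofLp_toEuclideanCLM, Matrix.mulVec, dotProduct, compression_apply, inner_sum,
    inner_smul_right, mul_comm]

end Compression

section LatticeAveraging

/-- The inclusion of the box `{0, …, n - 1}ᵈ` into the lattice `ℤᵈ`. -/
def boxPoint {d : Type*} {n : ℕ} (k : d → Fin n) : d → ℤ := fun i => k i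

lemma boxPoint_injective {d : Type*} {n : ℕ} :
    Function.Injective (boxPoint : (d → Fin n) → d → ℤ) := fun _ _ h =>
  funext fun i => Fin.ext (Int.ofNat_injective (congrFun h i))

lemma card_filter_fin_sub_eq (n : ℕ) (m : ℤ) :
    #{p : Fin n × Fin n | (p.2 : ℤ) - p.1 = m} = n - m.natAbs := by
  rw [← Finset.card_range (n - m.natAbs)]
  refine Finset.card_bij' (fun p _ => min p.1.1 p.2.1)
    (fun x hx => (⟨x + (-m).toNat, ?_⟩, ⟨x + m.toNat, ?_⟩)) ?_ ?_ ?_ ?_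
  all_goals simp only [Finset.mem_range, Finset.mem_filter, Finset.mem_univ, true_and,
    Prod.forall, Prod.mk.injEq, Fin.ext_iff] at *
  all_goals grind

variable {d : Type*} [Fintype d]

/-- The weight `∏ᵢ (1 - |mᵢ| / n)⁺` of the multivariate Fejér mean of order `n`; natural-number
subtraction takes the positive part. -/
def fejerWeight (n : ℕ) (m : d → ℤ) : ℝ := ∏ i, ((n - (m i).natAbs : ℕ) / n : ℝ)

lemma fejerWeight_nonneg (n : ℕ) (m : d → ℤ) : 0 ≤ fejerWeight n m :=
  Finset.prod_nonneg fun _ _ => by positivity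

lemma fejerWeight_le_one (n : ℕ) (m : d → ℤ) : fejerWeight n m ≤ 1 :=
  Finset.prod_le_one (fun _ _ => by positivity) fun _ _ =>
    div_le_one_of_le₀ (mod_cast Nat.sub_le n _) (by positivity)

lemma tendsto_fejerWeight (m : d → ℤ) :
    Tendsto (fun n => fejerWeight n m) atTop (𝓝 1) := by
  suffices h : ∀ a : ℕ, Tendsto (fun n : ℕ => ((n - a : ℕ) / n : ℝ)) atTop (𝓝 1) by
    simpa [fejerWeight] using tendsto_finsetProd Finset.univ fun i _ => h (m i).natAbs
  intro a
  have limit : Tendsto (fun n : ℕ => 1 - (a : ℝ) / n) atTop (𝓝 1) := by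
    simpa using (tendsto_const_div_atTop_nhds_zero_nat (a : ℝ)).const_sub 1
  refine limit.congr' ?_
  filter_upwards [eventually_gt_atTop 0, eventually_ge_atTop a] with n hn ha
  rw [Nat.cast_sub ha, sub_div, div_self (by positivity)]

variable [DecidableEq d]

lemma card_filter_boxPoint_sub_eq (n : ℕ) (m : d → ℤ) :
    #{p : (d → Fin n) × (d → Fin n) | boxPoint p.2 - boxPoint p.1 = m} =
      ∏ i, (n - (m i).natAbs) := by
  simp_rw [← card_filter_fin_sub_eq, ← Fintype.card_piFinset]
  refine Finset.card_equiv (Equiv.arrowProdEquivProdArrow d _ _).symm fun p => ?_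
  simp [funext_iff, boxPoint]

lemma average_boxPoint_sub_eq_tsum {E : Type*} [NormedAddCommGroup E] [NormedSpace ℝ E]
    (c : (d → ℤ) → E) (n : ℕ) :
    ((n : ℝ) ^ Fintype.card d)⁻¹ • ∑ k : d → Fin n, ∑ l : d → Fin n, c (boxPoint l - boxPoint k) =
      ∑' m, fejerWeight n m • c m := by
  have fejerWeight_eq (m : d → ℤ) : fejerWeight n m = ((n : ℝ) ^ Fintype.card d)⁻¹ *
      #{p : (d → Fin n) × (d → Fin n) | boxPoint p.2 - boxPoint p.1 = m} := by
    simp [fejerWeight, card_filter_boxPoint_sub_eq, Finset.prod_mul_distrib, div_eq_inv_mul]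
  simp only [← Fintype.sum_prod_type', fejerWeight_eq, mul_smul, Nat.cast_smul_eq_nsmul]
  rw [Finset.sum_comp c fun p : (d → Fin n) × (d → Fin n) => boxPoint p.2 - boxPoint p.1,
    Finset.smul_sum]
  refine (tsum_eq_sum fun m hm => ?_).symm
  simp_all

theorem tendsto_average_boxPoint_sub {E : Type*} [NormedAddCommGroup E] [NormedSpace ℝ E]
    [CompleteSpace E] {c : (d → ℤ) → E} (hc : Summable fun m => ‖c m‖) :
    Tendsto (fun n : ℕ => ((n : ℝ) ^ Fintype.card d)⁻¹ •
      ∑ k : d → Fin n, ∑ l : d → Fin n, c (boxPoint l - boxPoint k)) atTop (𝓝 (∑' m, c m)) := by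
  simp_rw [average_boxPoint_sub_eq_tsum]
  refine tendsto_tsum_of_dominated_convergence hc (fun m => ?_) (.of_forall fun n m => ?_)
  · simpa using (tendsto_fejerWeight m).smul_const (c m)
  · rw [norm_smul, Real.norm_of_nonneg (fejerWeight_nonneg n m)]
    exact mul_le_of_le_one_left (norm_nonneg _) (fejerWeight_le_one n m)

end LatticeAveraging

section Multiplication

variable {α 𝕜 : Type*} [MeasurableSpace α] {μ : Measure α} [RCLike 𝕜] {φ ψ : α → 𝕜}
  (p : ℝ≥0∞) [Fact (1 ≤ p)]

/-- The operator of multiplication by an essentially bounded function `φ` on `Lᵖ`. -/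
def multiplication (hφ : MemLp φ ∞ μ) : Lp 𝕜 p μ →L[𝕜] Lp 𝕜 p μ :=
  (ContinuousLinearMap.mul 𝕜 𝕜).holderL μ ∞ p p hφ.toLp

variable {p}

lemma coeFn_multiplication (hφ : MemLp φ ∞ μ) (f : Lp 𝕜 p μ) :
    multiplication p hφ f =ᵐ[μ] fun x => φ x * f x := by
  filter_upwards [(ContinuousLinearMap.mul 𝕜 𝕜).coeFn_holder (r := p) hφ.toLp f, hφ.coeFn_toLp]
    with x holder_eq toLp_eq
  rw [← toLp_eq]
  exact holder_eq

lemma multiplication_add (hφ : MemLp φ ∞ μ) (hψ : MemLp ψ ∞ μ) :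
    multiplication p (hφ.add hψ) = multiplication p hφ + multiplication p hψ := by
  rw [multiplication, MemLp.toLp_add hφ hψ, map_add]
  rfl

lemma multiplication_mul (hφ : MemLp φ ∞ μ) (hψ : MemLp ψ ∞ μ) :
    multiplication p (hψ.mul hφ : MemLp (φ * ψ) ∞ μ) =
      multiplication p hφ ∘L multiplication p hψ := by
  ext1 f
  refine Lp.ext ?_
  filter_upwards [coeFn_multiplication (hψ.mul hφ : MemLp (φ * ψ) ∞ μ) f,
    coeFn_multiplication hψ f, coeFn_multiplication hφ (multiplication p hψ f)]
    with x mul_eq inner_eq outer_eq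
  rw [ContinuousLinearMap.comp_apply, mul_eq, outer_eq, inner_eq, Pi.mul_apply, mul_assoc]

lemma multiplication_const (c : 𝕜) :
    multiplication p (memLp_top_const c : MemLp (fun _ => c) ∞ μ) =
      c • ContinuousLinearMap.id 𝕜 (Lp 𝕜 p μ) := by
  ext1 f
  refine Lp.ext ?_
  filter_upwards [coeFn_multiplication (memLp_top_const c) f, Lp.coeFn_smul c f]
    with x multiplication_eq smul_eq
  rw [multiplication_eq, _root_.smul_apply, ContinuousLinearMap.id_apply, smul_eq, Pi.smul_apply,
    smul_eq_mul]

end Multiplication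

section TorusToeplitz

open UnitAddTorus

-- Mathlib states its Fourier analysis on `UnitAddTorus` for these instances, which it keeps local.
local instance : MeasureSpace UnitAddCircle := ⟨AddCircle.haarAddCircle⟩

local instance : Measure.IsAddHaarMeasure (volume : Measure UnitAddCircle) :=
  inferInstanceAs (Measure.IsAddHaarMeasure AddCircle.haarAddCircle)

local instance : IsProbabilityMeasure (volume : Measure UnitAddCircle) :=
  inferInstanceAs (IsProbabilityMeasure AddCircle.haarAddCircle)

variable {d : Type*} [Fintype d] {φ ψ : UnitAddTorus d → ℂ}

/-- The multilevel Toeplitz matrix of a symbol `φ` on the torus `(ℝ/ℤ)ᵈ`. -/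
def torusToeplitz (n : ℕ) (φ : UnitAddTorus d → ℂ) : Matrix (d → Fin n) (d → Fin n) ℂ :=
  Matrix.of fun j k => mFourierCoeff φ (boxPoint j - boxPoint k)

lemma inner_mFourierLp_multiplication (hφ : MemLp φ ∞ volume) (j k : d → ℤ) :
    inner ℂ (mFourierLp 2 j) (multiplication 2 hφ (mFourierLp 2 k)) = mFourierCoeff φ (j - k) := by
  rw [L2.inner_def, mFourierCoeff]
  refine integral_congr_ae ?_
  filter_upwards [coeFn_multiplication hφ (mFourierLp 2 k), coeFn_mFourierLp 2 j,
    coeFn_mFourierLp 2 k] with t multiplication_eq mFourier_j_eq mFourier_k_eq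
  rw [multiplication_eq, mFourier_j_eq, mFourier_k_eq, RCLike.inner_apply,
    ← mFourier_neg, mul_assoc, ← mFourier_add, smul_eq_mul, mul_comm, neg_sub, sub_eq_add_neg]

-- Parseval's identity for `φ eₖ`, whose Fourier coefficients are those of `φ` shifted by `k`.
lemma hasSum_sq_norm_mFourierCoeff_of_memLp_top (hφ : MemLp φ ∞ volume) (k : d → ℤ) :
    HasSum (fun m => ‖mFourierCoeff φ m‖ ^ 2) (‖multiplication 2 hφ (mFourierLp 2 k)‖ ^ 2) := by
  set f := multiplication 2 hφ (mFourierLp 2 k) with hf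
  have coefficient (m : d → ℤ) : mFourierCoeff f m = mFourierCoeff φ (m - k) := by
    rw [← mFourierBasis_repr, HilbertBasis.repr_apply_apply, coe_mFourierBasis, hf,
      inner_mFourierLp_multiplication]
  rw [← (Equiv.subRight k).hasSum_iff]
  simpa [Function.comp_def, mFourierBasis_repr, coefficient] using
    lp.hasSum_norm (p := 2) (by norm_num) (mFourierBasis.repr f)

lemma orthonormal_mFourierLp_boxPoint (n : ℕ) :
    Orthonormal ℂ fun k : d → Fin n => (mFourierLp 2 (boxPoint k) : Lp ℂ 2 volume) :=
  orthonormal_mFourier.comp _ boxPoint_injective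

lemma torusToeplitz_eq_compression (hφ : MemLp φ ∞ volume) (n : ℕ) :
    torusToeplitz n φ =
      compression (fun k : d → Fin n => mFourierLp 2 (boxPoint k)) (multiplication 2 hφ) := by
  ext j k
  exact (inner_mFourierLp_multiplication hφ _ _).symm

lemma torusToeplitz_add (hφ : MemLp φ ∞ volume) (hψ : MemLp ψ ∞ volume) (n : ℕ) :
    torusToeplitz n (φ + ψ) = torusToeplitz n φ + torusToeplitz n ψ := by
  rw [torusToeplitz_eq_compression hφ, torusToeplitz_eq_compression hψ,
    torusToeplitz_eq_compression (hφ.add hψ), multiplication_add, map_add]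

variable [DecidableEq d]

lemma torusToeplitz_const (c : ℂ) (n : ℕ) :
    torusToeplitz n (fun _ : UnitAddTorus d => c) = algebraMap ℂ _ c := by
  rw [torusToeplitz_eq_compression (memLp_top_const c), multiplication_const, map_smul,
    compression_id (orthonormal_mFourierLp_boxPoint n), Algebra.algebraMap_eq_smul_one]

open scoped Matrix.Norms.L2Operator in
lemma norm_torusToeplitz_le (hφ : MemLp φ ∞ volume) (n : ℕ) :
    ‖torusToeplitz n φ‖ ≤ ‖multiplication 2 hφ‖ := by
  rw [torusToeplitz_eq_compression hφ]
  exact norm_compression_le (orthonormal_mFourierLp_boxPoint n) _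

lemma normalizedHS_torusToeplitz_mul_sub_sq_le (hφ : MemLp φ ∞ volume) (hψ : MemLp ψ ∞ volume)
    (n : ℕ) :
    normalizedHS (𝕜 := ℂ) (torusToeplitz n (φ * ψ) - torusToeplitz n φ * torusToeplitz n ψ) ^ 2 ≤
      ‖multiplication 2 hφ‖ ^ 2 * (((n : ℝ) ^ Fintype.card d)⁻¹ * ∑ k : d → Fin n,
        (∑' m, ‖mFourierCoeff ψ m‖ ^ 2 -
          ∑ l : d → Fin n, ‖mFourierCoeff ψ (boxPoint l - boxPoint k)‖ ^ 2)) := by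
  have defect_le := normalizedHS_compression_comp_sub_sq_le
    (orthonormal_mFourierLp_boxPoint (d := d) n) (multiplication 2 hφ) (multiplication 2 hψ)
  simpa [← multiplication_mul, ← torusToeplitz_eq_compression, inner_mFourierLp_multiplication,
    ← (hasSum_sq_norm_mFourierCoeff_of_memLp_top hψ _).tsum_eq] using defect_le

theorem tendsto_normalizedHS_torusToeplitz_mul_sub (hφ : MemLp φ ∞ volume)
    (hψ : MemLp ψ ∞ volume) :
    Tendsto (fun n => normalizedHS (𝕜 := ℂ)
      (torusToeplitz n (φ * ψ) - torusToeplitz n φ * torusToeplitz n ψ)) atTop (𝓝 0) := by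
  have summable_sq : Summable fun m => ‖mFourierCoeff ψ m‖ ^ 2 :=
    (hasSum_sq_norm_mFourierCoeff_of_memLp_top hψ 0).summable
  have average_tendsto := tendsto_average_boxPoint_sub (c := fun m => ‖mFourierCoeff ψ m‖ ^ 2)
    (by simpa using summable_sq)
  have bound_tendsto : Tendsto (fun n : ℕ => ‖multiplication 2 hφ‖ ^ 2 *
      (((n : ℝ) ^ Fintype.card d)⁻¹ * ∑ k : d → Fin n, (∑' m, ‖mFourierCoeff ψ m‖ ^ 2 -
        ∑ l : d → Fin n, ‖mFourierCoeff ψ (boxPoint l - boxPoint k)‖ ^ 2))) atTop (𝓝 0) := by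
    rw [← mul_zero (‖multiplication 2 hφ‖ ^ 2)]
    refine Tendsto.const_mul _ ?_
    rw [← sub_self (∑' m, ‖mFourierCoeff ψ m‖ ^ 2)]
    refine (average_tendsto.const_sub _).congr' ?_
    filter_upwards [eventually_gt_atTop 0] with n hn
    rw [Finset.sum_sub_distrib, mul_sub]
    simp [hn.ne']
  have sq_tendsto := squeeze_zero (fun _ => sq_nonneg _)
    (normalizedHS_torusToeplitz_mul_sub_sq_le hφ hψ) bound_tendsto
  simpa [Real.sqrt_sq] using sq_tendsto.sqrt

open scoped Matrix.Norms.L2Operator in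
variable (d) in
/-- The algebra of pairs of a sequence of matrices, bounded in operator norm, and an essentially
bounded symbol `φ` to whose Toeplitz matrices the sequence is asymptotic in normalized
Hilbert–Schmidt norm. -/
def szegoAlgebra :
    Subalgebra ℂ ((∀ n, Matrix (d → Fin n) (d → Fin n) ℂ) × (UnitAddTorus d → ℂ)) where
  carrier := {x | MemLp x.2 ∞ volume ∧ (∃ C, ∀ n, ‖x.1 n‖ ≤ C) ∧
    Tendsto (fun n => normalizedHS (𝕜 := ℂ) (x.1 n - torusToeplitz n x.2)) atTop (𝓝 0)}
  mul_mem' := by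
    rintro ⟨A, φ⟩ ⟨B, ψ⟩ ⟨hφ, ⟨C, hC⟩, hA⟩ ⟨hψ, ⟨D, hD⟩, hB⟩
    refine ⟨hψ.mul hφ, ⟨C * D, fun n => norm_mul_le_of_le (hC n) (hD n)⟩, ?_⟩
    have bound_tendsto := ((hA.mul_const D).add (hB.const_mul ‖multiplication 2 hφ‖)).add
      (tendsto_normalizedHS_torusToeplitz_mul_sub hφ hψ)
    simp only [zero_mul, mul_zero, add_zero] at bound_tendsto
    refine squeeze_zero (fun _ => apply_nonneg _ _) (fun n => ?_) bound_tendsto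
    refine (normalizedHS_mul_sub_le _ _ (torusToeplitz n φ) (torusToeplitz n ψ) _).trans ?_
    gcongr
    exacts [hD n, norm_torusToeplitz_le hφ n, le_rfl]
  add_mem' := by
    rintro ⟨A, φ⟩ ⟨B, ψ⟩ ⟨hφ, ⟨C, hC⟩, hA⟩ ⟨hψ, ⟨D, hD⟩, hB⟩
    refine ⟨hφ.add hψ, ⟨C + D, fun n => norm_add_le_of_le (hC n) (hD n)⟩, ?_⟩
    refine squeeze_zero (fun _ => apply_nonneg _ _) (fun n => ?_) (by simpa using hA.add hB)
    simp only [Prod.fst_add, Prod.snd_add, Pi.add_apply, torusToeplitz_add hφ hψ, add_sub_add_comm]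
    exact map_add_le_add _ _ _
  algebraMap_mem' c := by
    have algebraMap_eq : algebraMap ℂ ((∀ n, Matrix (d → Fin n) (d → Fin n) ℂ) ×
        (UnitAddTorus d → ℂ)) c = (fun n => torusToeplitz n fun _ => c, fun _ => c) :=
      Prod.ext (funext fun n => (torusToeplitz_const c n).symm) rfl
    rw [algebraMap_eq]
    exact ⟨memLp_top_const c, ⟨_, norm_torusToeplitz_le (memLp_top_const c)⟩, by simp⟩

lemma torusToeplitz_mem_szegoAlgebra (hφ : MemLp φ ∞ volume) :
    (fun n => torusToeplitz n φ, φ) ∈ szegoAlgebra d :=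
  ⟨hφ, ⟨_, norm_torusToeplitz_le hφ⟩, by simp⟩

lemma trace_torusToeplitz (n : ℕ) :
    (torusToeplitz n φ).trace = (n : ℂ) ^ Fintype.card d * ∫ t, φ t := by
  simp [Matrix.trace, torusToeplitz, mFourierCoeff, mFourier_zero]

theorem tendsto_trace_of_mem_szegoAlgebra
    {x : (∀ n, Matrix (d → Fin n) (d → Fin n) ℂ) × (UnitAddTorus d → ℂ)}
    (hx : x ∈ szegoAlgebra d) :
    Tendsto (fun n : ℕ => ((n : ℂ) ^ Fintype.card d)⁻¹ * (x.1 n).trace) atTop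
      (𝓝 (∫ t, x.2 t)) := by
  rw [tendsto_iff_norm_sub_tendsto_zero]
  refine squeeze_zero' (.of_forall fun _ => norm_nonneg _) ?_ hx.2.2
  filter_upwards [eventually_gt_atTop 0] with n hn
  have card_ne_zero : (n : ℂ) ^ Fintype.card d ≠ 0 := pow_ne_zero _ (mod_cast hn.ne')
  rw [← inv_mul_cancel_left₀ card_ne_zero (∫ t, x.2 t), ← trace_torusToeplitz, ← mul_sub,
    ← Matrix.trace_sub]
  simpa using norm_trace_div_card_le_normalizedHS (x.1 n - torusToeplitz n x.2)

variable {ν : ℕ}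

/-- The angles in `(0, 2π]` of a point of the torus `(ℝ/ℤ)^ν`. They lie outside `cube ν` only on a
null set. -/
def torusAngle (t : UnitAddTorus (Fin ν)) : Fin ν → ℝ :=
  (2 * Real.pi) • (measurableEquivPiIoc (fun _ => 0) t : Fin ν → ℝ)

lemma measurableEmbedding_torusAngle : MeasurableEmbedding (torusAngle (ν := ν)) :=
  (measurableEmbedding_const_smul₀ Real.two_pi_pos.ne').comp <|
    (MeasurableEmbedding.subtype_coe (.univ_pi' fun _ => measurableSet_Ioc)).comp
      (measurableEquivPiIoc fun _ => 0).measurableEmbedding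

lemma measurePreserving_torusAngle :
    MeasurePreserving torusAngle (volume : Measure (UnitAddTorus (Fin ν)))
      (ENNReal.ofReal ((2 * Real.pi) ^ ν)⁻¹ • volume.restrict (cube ν)) := by
  have scale : MeasurePreserving (fun x : Fin ν → ℝ => (2 * Real.pi) • x) volume
      (ENNReal.ofReal ((2 * Real.pi) ^ ν)⁻¹ • volume) := by
    refine ⟨measurable_const_smul _, ?_⟩
    rw [Measure.map_addHaar_smul volume Real.two_pi_pos.ne', Module.finrank_fin_fun,
      abs_of_pos (by positivity)]
  have cube_ae_eq : cube ν =ᵐ[volume] univ.pi fun _ => Ioc 0 (2 * Real.pi) :=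
    Measure.univ_pi_Ico_ae_eq_Icc.trans Measure.univ_pi_Ioc_ae_eq_Icc.symm
  have preimage_eq : (fun x : Fin ν → ℝ => (2 * Real.pi) • x) ⁻¹'
      (univ.pi fun _ => Ioc 0 (2 * Real.pi)) = {x | ∀ i, x i ∈ Ioc 0 (0 + 1)} := by
    ext x
    simp [Real.pi_pos]
  have scale_cube := scale.restrict_preimage
    (MeasurableSet.univ_pi fun _ : Fin ν => measurableSet_Ioc (a := 0) (b := 2 * Real.pi))
  rw [preimage_eq, Measure.restrict_smul, ← Measure.restrict_congr_set cube_ae_eq] at scale_cube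
  exact scale_cube.comp <|
    (measurePreserving_subtype_coe (.univ_pi' fun _ => measurableSet_Ioc)).comp <|
      measurePreserving_equivPiIoc fun _ => 0

variable {E : Type*} [NormedAddCommGroup E]

lemma integral_comp_torusAngle [NormedSpace ℝ E] (g : (Fin ν → ℝ) → E) :
    ∫ t, g (torusAngle t) = ((2 * Real.pi) ^ ν)⁻¹ • ∫ x in cube ν, g x := by
  rw [measurePreserving_torusAngle.integral_comp measurableEmbedding_torusAngle,
    integral_smul_measure, ENNReal.toReal_ofReal (by positivity)]

lemma memLp_comp_torusAngle {a : (Fin ν → ℝ) → E} {p : ℝ≥0∞}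
    (ha : MemLp a p (volume.restrict (cube ν))) : MemLp (a ∘ torusAngle) p volume :=
  (ha.smul_measure ENNReal.ofReal_ne_top).comp_measurePreserving measurePreserving_torusAngle

lemma mFourier_eq_exp_torusAngle (j : Fin ν → ℤ) (t : UnitAddTorus (Fin ν)) :
    mFourier j t = Complex.exp (Complex.I * ∑ m, (j m : ℂ) * (torusAngle t m : ℂ)) := by
  conv_lhs => rw [← (measurableEquivPiIoc fun _ => 0).symm_apply_apply t]
  rw [coe_symm_measurableEquivPiIoc_apply]
  simp only [mFourier, ContinuousMap.coe_mk, fourier_coe_apply, Finset.mul_sum, Complex.exp_sum,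
    torusAngle]
  refine Finset.prod_congr rfl fun i _ => congrArg _ ?_
  simp only [coe_measurableEquivPiIoc_apply, Complex.ofReal_one, div_one, Pi.smul_apply,
    smul_eq_mul, Complex.ofReal_mul, Complex.ofReal_ofNat]
  ring

lemma fourierCoefficient_eq_mFourierCoeff (a : (Fin ν → ℝ) → ℂ) (j : Fin ν → ℤ) :
    fourierCoefficient a j = mFourierCoeff (a ∘ torusAngle) j := by
  rw [fourierCoefficient, ← Complex.ofReal_inv, ← Complex.real_smul, ← integral_comp_torusAngle,
    mFourierCoeff]
  simp [mFourier_eq_exp_torusAngle, mul_comm]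

lemma toeplitz_eq_torusToeplitz (n : ℕ) (a : (Fin ν → ℝ) → ℂ) :
    toeplitz n a = torusToeplitz n (a ∘ torusAngle) := by
  ext j k
  exact fourierCoefficient_eq_mFourierCoeff a _

end TorusToeplitz

lemma map_prod_ofFn_aeval {R A B : Type*} [CommSemiring R] [Semiring A] [Semiring B]
    [Algebra R A] [Algebra R B] (F : A →ₐ[R] B) {r : ℕ} (x : Fin r → A)
    (f : Fin r → Polynomial R) :
    F (List.ofFn fun k => Polynomial.aeval (x k) (f k)).prod =
      (List.ofFn fun k => Polynomial.aeval (F (x k)) (f k)).prod := by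
  simp [map_list_prod, List.map_ofFn, Polynomial.aeval_algHom_apply, Function.comp_def]

theorem szego_polynomial_general {ν r : ℕ}
    (a : Fin r → (Fin ν → ℝ) → ℂ)
    (ha : ∀ k, MemLp (a k) ∞ (volume.restrict (cube ν)))
    (f : Fin r → Polynomial ℂ) :
    Tendsto
      (fun n : ℕ => ((n : ℂ) ^ ν)⁻¹ *
        Matrix.trace
          (List.ofFn fun k => Polynomial.aeval (toeplitz n (a k)) (f k)).prod)
      atTop
      (𝓝 ((((2 * Real.pi) ^ ν : ℝ) : ℂ)⁻¹ *
        ∫ x in cube ν, ∏ k, (f k).eval (a k x))) := by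
  let x (k : Fin r) : szegoAlgebra (Fin ν) :=
    ⟨_, torusToeplitz_mem_szegoAlgebra (memLp_comp_torusAngle (ha k))⟩
  let y := (List.ofFn fun k => Polynomial.aeval (x k) (f k)).prod
  have matrix_eq (n : ℕ) : y.1.1 n =
      (List.ofFn fun k => Polynomial.aeval (toeplitz n (a k)) (f k)).prod := by
    simp only [toeplitz_eq_torusToeplitz]
    exact map_prod_ofFn_aeval
      ((Pi.evalAlgHom ℂ _ n).comp <| (AlgHom.fst ℂ _ _).comp (szegoAlgebra (Fin ν)).val) x f
  have symbol_eq (t) : y.1.2 t = ∏ k, (f k).eval (a k (torusAngle t)) := by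
    simp only [← List.prod_ofFn, ← Polynomial.coe_aeval_eq_eval]
    exact map_prod_ofFn_aeval
      ((Pi.evalAlgHom ℂ _ t).comp <| (AlgHom.snd ℂ _ _).comp (szegoAlgebra (Fin ν)).val) x f
  have integral_eq := integral_comp_torusAngle fun x => ∏ k, (f k).eval (a k x)
  rw [← Complex.ofReal_inv, ← Complex.real_smul, ← integral_eq]
  simpa [matrix_eq, symbol_eq] using tendsto_trace_of_mem_szegoAlgebra y.2

/-- **Szegő-type theorem, polynomial version.**  For bounded measurable
`a_1, …, a_r : [0,2π)^ν → ℂ` and polynomials `f_1, …, f_r`,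
`lim_n (1/n^ν) Tr[f_1(T_n(a_1)) ⋯ f_r(T_n(a_r))]
  = (2π)^{−ν} ∫_{[0,2π)^ν} f_1(a_1(x)) ⋯ f_r(a_r(x)) dx`. -/
theorem szego_polynomial {ν r : ℕ} (hν : 1 ≤ ν)
    (a : Fin r → (Fin ν → ℝ) → ℂ)
    (hmeas : ∀ k, Measurable (a k))
    (hbdd : ∀ k, ∃ C : ℝ, ∀ x, ‖a k x‖ ≤ C)
    (f : Fin r → Polynomial ℂ) :
    Tendsto
      (fun n : ℕ => ((n : ℂ) ^ ν)⁻¹ *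
        Matrix.trace
          (List.ofFn fun k => Polynomial.aeval (toeplitz n (a k)) (f k)).prod)
      atTop
      (nhds ((((2 * Real.pi) ^ ν : ℝ) : ℂ)⁻¹ *
        ∫ x in cube ν, ∏ k, (f k).eval (a k x))) := by
  refine szego_polynomial_general a (fun k => ?_) f
  obtain ⟨C, hC⟩ := hbdd k
  exact memLp_top_of_bound (hmeas k).aestronglyMeasurable C (ae_of_all _ hC)

end
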